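/- Let q, m ∈ ℕ, let I ⊆ ℝ, let μ : I → ℝ and let φ₁, …, φ_q : I → ℝ be functions, let λ₁ ≥ λ₂ ≥ ⋯ ≥ λ_q > 0, and let ξ = (ξ₁, …, ξ_q) be a random vector in ℝ^q whose characteristic function satisfies E[exp(i⟨u, ξ⟩)] = φ(∑_{j=1}^q λ_j u_j²) for all u ∈ ℝ^q, for some function φ : [0,∞) → ℂ. Define the stochastic process X(t) = μ(t) + ∑_{j=1}^q ξ_j φ_j(t) and the kernel γ(s,t) = ∑_{j=1}^q λ_j φ_j(s) φ_j(t). Then for any points t₁, …, t_m ∈ I, the random vector X_m = (X(t₁), …, X(t_m)) has characteristic function E[exp(i⟨u, X_m⟩)] = exp(i ∑_{ℓ=1}^m u_ℓ μ(t_ℓ)) · φ(uᵀ Σ u) for all u ∈ ℝ^m, where Σ ∈ ℝ^{m×m} has entries Σ_{ℓ j} = γ(t_ℓ, t_j); that is, X_m has an elliptical distribution with location (μ(t₁), …, μ(t_m)), scatter matrix Σ and characteristic generator φ. -/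

import Mathlib

open MeasureTheory Matrix

/-- Finite-rank elliptical process: the evaluation vector at points `t₁, …, t_m`
is elliptical with location `(μ(t₁), …, μ(t_m))`, scatter matrix `Σ` with entries
`γ(t_ℓ, t_j)` and the same characteristic generator `φ`. -/
theorem evaluation_vector_elliptical
    {Ω : Type*} [MeasurableSpace Ω] (P : Measure Ω) [IsProbabilityMeasure P]
    (q m : ℕ) (I : Set ℝ) (μ : ℝ → ℝ) (φfun : Fin q → ℝ → ℝ)
    (lam : Fin q → ℝ)
    (hlam_mono : ∀ i j : Fin q, i ≤ j → lam j ≤ lam i)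
    (hlam_pos : ∀ j, 0 < lam j)
    (ξ : Ω → Fin q → ℝ) (φ : ℝ → ℂ)
    (hchar : ∀ u : Fin q → ℝ,
      ∫ ω, Complex.exp (Complex.I * ((u ⬝ᵥ ξ ω : ℝ) : ℂ)) ∂P
        = φ (∑ j, lam j * u j ^ 2))
    (t : Fin m → ℝ) (ht : ∀ ℓ, t ℓ ∈ I)
    (Sig : Matrix (Fin m) (Fin m) ℝ)
    (hSig : ∀ ℓ j', Sig ℓ j' = ∑ j, lam j * φfun j (t ℓ) * φfun j (t j')) :
    ∀ u : Fin m → ℝ,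
      ∫ ω, Complex.exp (Complex.I *
          (((∑ ℓ, u ℓ * (μ (t ℓ) + ∑ j, ξ ω j * φfun j (t ℓ)) : ℝ)) : ℂ)) ∂P
        = Complex.exp (Complex.I * ((∑ ℓ, u ℓ * μ (t ℓ) : ℝ) : ℂ))
            * φ (u ⬝ᵥ Sig.mulVec u) := by
  intro u
  have h1 : ∀ ω, (∑ ℓ, u ℓ * (μ (t ℓ) + ∑ j, ξ ω j * φfun j (t ℓ)))
      = (∑ ℓ, u ℓ * μ (t ℓ)) + (fun j => ∑ ℓ, u ℓ * φfun j (t ℓ)) ⬝ᵥ ξ ω := by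
    intro ω
    simp only [mul_add, Finset.sum_add_distrib, dotProduct, Finset.mul_sum, Finset.sum_mul]
    congr 1
    rw [Finset.sum_comm]
    refine Finset.sum_congr rfl fun j _ => Finset.sum_congr rfl fun ℓ _ => ?_
    ring
  have h2 : u ⬝ᵥ Sig.mulVec u = ∑ j, lam j * (∑ ℓ, u ℓ * φfun j (t ℓ)) ^ 2 := by
    simp only [dotProduct, Matrix.mulVec, hSig, sq, Finset.mul_sum, Finset.sum_mul]
    rw [Finset.sum_congr rfl fun ℓ _ => Finset.sum_comm, Finset.sum_comm]
    refine Finset.sum_congr rfl fun j _ => ?_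
    rw [Finset.sum_comm]
    refine Finset.sum_congr rfl fun k _ => Finset.sum_congr rfl fun ℓ _ => ?_
    ring
  rw [h2, ← hchar (fun j => ∑ ℓ, u ℓ * φfun j (t ℓ)), ← integral_const_mul]
  refine integral_congr_ae (Filter.Eventually.of_forall fun ω => ?_)
  simp only [h1]
  rw [← Complex.exp_add, ← mul_add, ← Complex.ofReal_add]
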